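/- Assume condition (R). Then the radius of starlikeness r*(h_{γ,σ}(·;q)) = r*_0(h_{γ,σ}(·;q)) satisfies Γ_q(γ+3)/(2σ²Γ_q(γ+1)) < r*(h_{γ,σ}(·;q)) < Γ_q(γ+3)Γ_q(γ+5) / ( σ²(2Γ_q(γ+1)Γ_q(γ+5) − 3q²Γ_q(γ+3)²) ). -/

import Mathlib

noncomputable def qPochInf (a q : ℝ) : ℝ := ∏' k : ℕ, (1 - a * q ^ k)

noncomputable def qGamma (q x : ℝ) : ℝ :=
  qPochInf q q * (1 - q) ^ (1 - x) / qPochInf (q ^ x) q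

noncomputable def qML (γ σ q : ℝ) (z : ℂ) : ℂ :=
  ∑' n : ℕ,
    (((-1) ^ n * σ ^ (2 * n) * q ^ (n * (n - 1)) / qGamma q (2 * n + γ + 1) : ℝ) : ℂ) * z ^ (2 * n)

noncomputable def qMLR (γ σ q : ℝ) (x : ℝ) : ℝ :=
  ∑' n : ℕ,
    ((-1) ^ n * σ ^ (2 * n) * q ^ (n * (n - 1)) / qGamma q (2 * n + γ + 1)) * x ^ (2 * n)

def condR (q γ : ℝ) : Prop :=
  (γ = 0 ∨ γ = 1) ∨
    (γ ∈ Set.Ioo (0 : ℝ) 2 ∧ γ ≠ 1 ∧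
      1 < q⁻¹ * (1 - q) * (1 - q ^ (γ + 1)) * (1 - q ^ (γ + 2)))

noncomputable def radiusStarlike (α : ℝ) (f : ℂ → ℂ) : ℝ :=
  sSup {r : ℝ | 0 < r ∧ ∀ z : ℂ, 0 < ‖z‖ → ‖z‖ < r →
    α < (z * deriv f z / f z).re}

noncomputable def radiusConvex (α : ℝ) (f : ℂ → ℂ) : ℝ :=
  sSup {r : ℝ | 0 < r ∧ ∀ z : ℂ, ‖z‖ < r →
    α < (1 + z * deriv (deriv f) z / deriv f z).re}

noncomputable def fML (γ σ q : ℝ) (z : ℂ) : ℂ :=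
  Complex.exp ((1 / ((γ : ℂ) + 1)) *
    Complex.log (z ^ ((γ : ℂ) + 1) * (qGamma q (γ + 1) : ℂ) * qML γ σ q z))

noncomputable def gML (γ σ q : ℝ) (z : ℂ) : ℂ :=
  z * (qGamma q (γ + 1) : ℂ) * qML γ σ q z

noncomputable def hML (γ σ q : ℝ) (z : ℂ) : ℂ :=
  z * (qGamma q (γ + 1) : ℂ) *
    ∑' n : ℕ,
      (((-1) ^ n * σ ^ (2 * n) * q ^ (n * (n - 1)) / qGamma q (2 * n + γ + 1) : ℝ) : ℂ) * z ^ n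

noncomputable def hMLR (γ σ q : ℝ) (x : ℝ) : ℝ :=
  x * qGamma q (γ + 1) *
    ∑' n : ℕ,
      ((-1) ^ n * σ ^ (2 * n) * q ^ (n * (n - 1)) / qGamma q (2 * n + γ + 1)) * x ^ n

structure CoefHyp (c : ℕ → ℝ) (d : ℝ) : Prop where
  c0 : c 0 = 1
  c1 : c 1 = 1
  c2 : c 2 = d
  dpos : 0 < d
  dle : d ≤ 3 / 10
  pos : ∀ n, 0 < c n
  ratio : ∀ n, c (n + 2) ≤ d * c (n + 1)

noncomputable def FF (c : ℕ → ℝ) (w : ℂ) : ℂ := ∑' n : ℕ, (((-1) ^ n * c n : ℝ) : ℂ) * w ^ n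
noncomputable def GG (c : ℕ → ℝ) (w : ℂ) : ℂ :=
  ∑' n : ℕ, (((-1) ^ n * c n : ℝ) : ℂ) * ((n + 1) * w ^ n)


theorem CoefHyp.geom {c : ℕ → ℝ} {d : ℝ} (H : CoefHyp c d) (m n : ℕ) : c (m + 1 + n) ≤ c (m + 1) * d ^ n := by
  induction n with
  | zero => simp
  | succ k ih =>
    have h1 := H.ratio (m + k)
    have h2 := H.dpos
    calc c (m + 1 + (k + 1)) = c (m + k + 2) := by ring_nf
      _ ≤ d * c (m + k + 1) := h1
      _ = d * c (m + 1 + k) := by ring_nf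
      _ ≤ d * (c (m + 1) * d ^ k) := by gcongr
      _ = _ := by ring

theorem CoefHyp.le_geom {c : ℕ → ℝ} {d : ℝ} (H : CoefHyp c d) (n : ℕ) : c n ≤ 4 * (3 / 10) ^ n := by
  have hd := H.dpos
  have hd' := H.dle
  rcases n with _ | n
  · rw [H.c0]; norm_num
  · have h := H.geom 0 n
    rw [zero_add, H.c1] at h
    have h2 : d ^ n ≤ (3 / 10 : ℝ) ^ n := by gcongr
    have h3 : (0 : ℝ) < (3 / 10) ^ n := by positivity
    rw [add_comm 1 n] at h
    rw [pow_succ]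
    linarith

theorem hasSum_lin (a x : ℝ) (hx0 : 0 ≤ x) (hx : x < 1) :
    HasSum (fun n : ℕ => ((n : ℝ) + a) * x ^ n) (x / (1 - x) ^ 2 + a / (1 - x)) := by
  have h1 := hasSum_coe_mul_geometric_of_norm_lt_one (r := x) (by rwa [Real.norm_of_nonneg hx0])
  have h2 := (hasSum_geometric_of_lt_one hx0 hx).mul_left a
  have h3 := h1.add h2
  have e : (fun n : ℕ => ((n : ℝ) + a) * x ^ n) = fun n : ℕ => (n : ℝ) * x ^ n + a * x ^ n := by
    funext n; ring
  rw [e, div_eq_mul_inv a]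
  exact h3

theorem CoefHyp.normG {c : ℕ → ℝ} {d : ℝ} (H : CoefHyp c d) (n : ℕ) (w : ℂ) :
    ‖(((-1) ^ n * c n : ℝ) : ℂ) * ((n + 1) * w ^ n)‖ = (n + 1) * c n * ‖w‖ ^ n := by
  rw [norm_mul, norm_mul, norm_pow, Complex.norm_real, norm_mul, norm_pow]
  have : ‖(n : ℂ) + 1‖ = n + 1 := by
    rw [← Nat.cast_succ, Complex.norm_natCast]; simp
  rw [this, Real.norm_of_nonneg (H.pos n).le]
  simp; ring

theorem CoefHyp.normF {c : ℕ → ℝ} {d : ℝ} (H : CoefHyp c d) (n : ℕ) (w : ℂ) :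
    ‖(((-1) ^ n * c n : ℝ) : ℂ) * w ^ n‖ = c n * ‖w‖ ^ n := by
  rw [norm_mul, norm_pow, Complex.norm_real, norm_mul, norm_pow]
  rw [Real.norm_of_nonneg (H.pos n).le]
  simp

theorem sumU {c : ℕ → ℝ} {d : ℝ} (H : CoefHyp c d) : Summable (fun n : ℕ => 4 * (((n : ℝ) + 1) * (6 / 10 : ℝ) ^ n)) :=
  (hasSum_lin 1 (6 / 10) (by norm_num) (by norm_num)).summable.mul_left 4

theorem CoefHyp.boundG {c : ℕ → ℝ} {d : ℝ} (H : CoefHyp c d) (n : ℕ) (w : ℂ) (hw : w ∈ Metric.ball (0 : ℂ) 2) :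
    ‖(((-1) ^ n * c n : ℝ) : ℂ) * ((n + 1) * w ^ n)‖ ≤ 4 * (((n : ℝ) + 1) * (6 / 10 : ℝ) ^ n) := by
  rw [H.normG]
  have h1 := H.le_geom n
  have h2 : ‖w‖ ≤ 2 := by simpa using (mem_ball_zero_iff.1 hw).le
  have h3 := (H.pos n).le
  calc (n + 1) * c n * ‖w‖ ^ n ≤ (n + 1) * (4 * (3 / 10) ^ n) * 2 ^ n := by gcongr
    _ = 4 * ((n + 1) * (3 / 10 * 2) ^ n) := by rw [mul_pow]; ring
    _ = _ := by norm_num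

theorem CoefHyp.boundF {c : ℕ → ℝ} {d : ℝ} (H : CoefHyp c d) (n : ℕ) (w : ℂ) (hw : w ∈ Metric.ball (0 : ℂ) 2) :
    ‖(((-1) ^ n * c n : ℝ) : ℂ) * w ^ n‖ ≤ 4 * (((n : ℝ) + 1) * (6 / 10 : ℝ) ^ n) := by
  refine le_trans ?_ (H.boundG n w hw)
  rw [H.normG, H.normF]
  have h3 := (H.pos n).le
  have : 0 ≤ (n : ℝ) * (c n * ‖w‖ ^ n) := by positivity
  linarith

theorem CoefHyp.contF {c : ℕ → ℝ} {d : ℝ} (H : CoefHyp c d) : ContinuousOn (FF c) (Metric.ball 0 2) :=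
  continuousOn_tsum (fun i => by fun_prop) (sumU H) H.boundF

theorem CoefHyp.contG {c : ℕ → ℝ} {d : ℝ} (H : CoefHyp c d) : ContinuousOn (GG c) (Metric.ball 0 2) :=
  continuousOn_tsum (fun i => by fun_prop) (sumU H) H.boundG

theorem CoefHyp.sF {c : ℕ → ℝ} {d : ℝ} (H : CoefHyp c d) (w : ℂ) (hw : w ∈ Metric.ball (0 : ℂ) 2) :
    Summable (fun n : ℕ => (((-1) ^ n * c n : ℝ) : ℂ) * w ^ n) :=
  Summable.of_norm_bounded (sumU H) (fun n => H.boundF n w hw)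

theorem CoefHyp.sG {c : ℕ → ℝ} {d : ℝ} (H : CoefHyp c d) (w : ℂ) (hw : w ∈ Metric.ball (0 : ℂ) 2) :
    Summable (fun n : ℕ => (((-1) ^ n * c n : ℝ) : ℂ) * ((n + 1) * w ^ n)) :=
  Summable.of_norm_bounded (sumU H) (fun n => H.boundG n w hw)

theorem CoefHyp.deriv {c : ℕ → ℝ} {d : ℝ} (H : CoefHyp c d) (w : ℂ) (hw : w ∈ Metric.ball (0 : ℂ) 2) :
    HasDerivAt (fun z => z * FF c z) (GG c w) w := by
  have h := hasDerivAt_tsum_of_isPreconnected (g := fun (n : ℕ) (z : ℂ) =>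
    (((-1) ^ n * c n : ℝ) : ℂ) * z ^ (n + 1))
    (g' := fun (n : ℕ) (z : ℂ) => (((-1) ^ n * c n : ℝ) : ℂ) * ((n + 1) * z ^ n))
    (y₀ := 0) (y := w)
    (sumU H) Metric.isOpen_ball (convex_ball (0 : ℂ) 2).isPreconnected ?_ H.boundG (by simp)
    (by simp [summable_zero]) hw
  · have e : (fun z => z * FF c z) =
        fun z => ∑' n : ℕ, (((-1) ^ n * c n : ℝ) : ℂ) * z ^ (n + 1) := by
      funext z
      rw [FF, ← tsum_mul_left]
      congr 1; funext n; ring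
    rw [e]
    exact h
  · intro n y _
    have := (hasDerivAt_pow (n + 1) y).const_mul (((-1) ^ n * c n : ℝ) : ℂ)
    simpa using this

theorem CoefHyp.tailF {c : ℕ → ℝ} {d : ℝ} (H : CoefHyp c d) (w : ℂ) (hw : ‖w‖ < 1) :
    ‖FF c w - (1 - w + d * w ^ 2)‖ ≤ d ^ 2 * ‖w‖ ^ 3 * (1 - d * ‖w‖)⁻¹ := by
  have hd := H.dpos
  have hd' := H.dle
  have hwb : w ∈ Metric.ball (0 : ℂ) 2 := by rw [mem_ball_zero_iff]; linarith
  have h := (H.sF w hwb).sum_add_tsum_nat_add 3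
  have e : FF c w - (1 - w + d * w ^ 2) =
      ∑' n : ℕ, (((-1) ^ (n + 3) * c (n + 3) : ℝ) : ℂ) * w ^ (n + 3) := by
    rw [FF, ← h]
    simp [Finset.sum_range_succ, H.c0, H.c1, H.c2]; ring
  rw [e]
  have hx0 : 0 ≤ d * ‖w‖ := by positivity
  have hx1 : d * ‖w‖ < 1 := by nlinarith [norm_nonneg w]
  refine tsum_of_norm_bounded ((hasSum_geometric_of_lt_one hx0 hx1).mul_left (d ^ 2 * ‖w‖ ^ 3)) ?_
  intro n
  rw [H.normF]
  have h1 := H.geom 1 (n + 1)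
  norm_num at h1
  rw [H.c2, show 2 + (n + 1) = n + 3 by ring] at h1
  calc c (n + 3) * ‖w‖ ^ (n + 3) ≤ d * d ^ (n + 1) * ‖w‖ ^ (n + 3) := by gcongr
    _ = _ := by rw [mul_pow]; ring

theorem CoefHyp.tailG {c : ℕ → ℝ} {d : ℝ} (H : CoefHyp c d) (w : ℂ) (hw : ‖w‖ < 1) :
    ‖GG c w - (1 - 2 * w + 3 * d * w ^ 2)‖ ≤
      d ^ 2 * ‖w‖ ^ 3 * (d * ‖w‖ / (1 - d * ‖w‖) ^ 2 + 4 / (1 - d * ‖w‖)) := by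
  have hd := H.dpos
  have hd' := H.dle
  have hwb : w ∈ Metric.ball (0 : ℂ) 2 := by rw [mem_ball_zero_iff]; linarith
  have h := (H.sG w hwb).sum_add_tsum_nat_add 3
  have e : GG c w - (1 - 2 * w + 3 * d * w ^ 2) =
      ∑' n : ℕ, (((-1) ^ (n + 3) * c (n + 3) : ℝ) : ℂ) * (((n + 3 : ℕ) + 1) * w ^ (n + 3)) := by
    rw [GG, ← h]
    simp [Finset.sum_range_succ, H.c0, H.c1, H.c2]; ring
  rw [e]
  have hx0 : 0 ≤ d * ‖w‖ := by positivity
  have hx1 : d * ‖w‖ < 1 := by nlinarith [norm_nonneg w]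
  refine tsum_of_norm_bounded ((hasSum_lin 4 _ hx0 hx1).mul_left (d ^ 2 * ‖w‖ ^ 3)) ?_
  intro n
  rw [H.normG]
  have h1 := H.geom 1 (n + 1)
  norm_num at h1
  rw [H.c2, show 2 + (n + 1) = n + 3 by ring] at h1
  calc ((n + 3 : ℕ) + 1) * c (n + 3) * ‖w‖ ^ (n + 3)
      ≤ ((n + 3 : ℕ) + 1) * (d * d ^ (n + 1)) * ‖w‖ ^ (n + 3) := by gcongr
    _ = _ := by rw [mul_pow]; push_cast; ring

theorem CoefHyp.tailG4 {c : ℕ → ℝ} {d : ℝ} (H : CoefHyp c d) (w : ℂ) (hw : ‖w‖ < 1) :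
    ‖GG c w - (1 - 2 * w + 3 * d * w ^ 2 - 4 * c 3 * w ^ 3)‖ ≤
      c 3 * ‖w‖ ^ 3 * (d * ‖w‖) * (d * ‖w‖ / (1 - d * ‖w‖) ^ 2 + 5 / (1 - d * ‖w‖)) := by
  have hd := H.dpos
  have hd' := H.dle
  have hwb : w ∈ Metric.ball (0 : ℂ) 2 := by rw [mem_ball_zero_iff]; linarith
  have h := (H.sG w hwb).sum_add_tsum_nat_add 4
  have e : GG c w - (1 - 2 * w + 3 * d * w ^ 2 - 4 * c 3 * w ^ 3) =
      ∑' n : ℕ, (((-1) ^ (n + 4) * c (n + 4) : ℝ) : ℂ) * (((n + 4 : ℕ) + 1) * w ^ (n + 4)) := by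
    rw [GG, ← h]
    simp [Finset.sum_range_succ, H.c0, H.c1, H.c2]; ring
  rw [e]
  have hx0 : 0 ≤ d * ‖w‖ := by positivity
  have hx1 : d * ‖w‖ < 1 := by nlinarith [norm_nonneg w]
  refine tsum_of_norm_bounded
    ((hasSum_lin 5 _ hx0 hx1).mul_left (c 3 * ‖w‖ ^ 3 * (d * ‖w‖))) ?_
  intro n
  rw [H.normG]
  have h1 := H.geom 2 (n + 1)
  norm_num at h1
  rw [show 3 + (n + 1) = n + 4 by ring] at h1
  calc ((n + 4 : ℕ) + 1) * c (n + 4) * ‖w‖ ^ (n + 4)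
      ≤ ((n + 4 : ℕ) + 1) * (c 3 * d ^ (n + 1)) * ‖w‖ ^ (n + 4) := by gcongr
    _ = _ := by rw [mul_pow]; push_cast; ring

theorem CoefHyp.lowerMain {c : ℕ → ℝ} {d : ℝ} (H : CoefHyp c d) (w : ℂ) (hw : ‖w‖ ≤ 1 / 2) :
    0 < (GG c w * (starRingEnd ℂ) (FF c w)).re := by
  have hd := H.dpos
  have hd' := H.dle
  have t1 := H.tailF w (by linarith)
  have t2 := H.tailG w (by linarith)
  set P : ℂ := 1 - w + d * w ^ 2 with hP
  set Q : ℂ := 1 - 2 * w + 3 * d * w ^ 2 with hQ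
  set E1 := FF c w - P with hE1
  set E2 := GG c w - Q with hE2
  have hF : FF c w = P + E1 := by rw [hE1]; ring
  have hG : GG c w = Q + E2 := by rw [hE2]; ring
  have hs0 : 0 ≤ ‖w‖ := norm_nonneg w
  set s := ‖w‖ with hs
  have hx : d * s ≤ 15 / 100 := by nlinarith
  have hx0 : 0 ≤ d * s := by positivity
  have hi : (1 - d * s)⁻¹ ≤ 20 / 17 := by
    rw [inv_le_comm₀ (by linarith) (by norm_num)]; norm_num; linarith
  have hi0 : 0 ≤ (1 - d * s)⁻¹ := by rw [inv_nonneg]; linarith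
  have hi2 : (1 - d * s)⁻¹ ^ 2 ≤ (20 / 17) ^ 2 := by gcongr
  have hK0 : 0 ≤ d ^ 2 * s ^ 3 := by positivity
  have e1 : ‖E1‖ ≤ d ^ 2 * s ^ 3 * (20 / 17) := t1.trans (by gcongr)
  have e2 : ‖E2‖ ≤ d ^ 2 * s ^ 3 * (492 / 100) := by
    refine t2.trans ?_
    gcongr
    rw [div_eq_mul_inv, div_eq_mul_inv, ← inv_pow]
    have : d * s * (1 - d * s)⁻¹ ^ 2 ≤ 15 / 100 * (20 / 17) ^ 2 := by gcongr
    norm_num at this ⊢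
    linarith
  have nP : ‖P‖ ≤ 1.575 := by
    calc ‖P‖ ≤ 1 + s + d * s ^ 2 := by
          refine (norm_add_le _ _).trans ?_
          refine add_le_add ((norm_sub_le _ _).trans (by simp [hs])) ?_
          simp [abs_of_pos hd, hs]
      _ ≤ _ := by norm_num; nlinarith
  have nQ : ‖Q‖ ≤ 2.225 := by
    calc ‖Q‖ ≤ 1 + 2 * s + 3 * d * s ^ 2 := by
          refine (norm_add_le _ _).trans ?_
          refine add_le_add ((norm_sub_le _ _).trans (by simp [hs])) ?_
          simp [abs_of_pos hd, hs]
      _ ≤ _ := by norm_num; nlinarith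
  have main : (1 - s) * (1 - 2 * s) + d * s ^ 2 * (4 - 5 * s) + 3 * d ^ 2 * s ^ 4 ≤
      (Q * (starRingEnd ℂ) P).re := by
    have hxs : w.re ≤ s := Complex.re_le_norm w
    have hss : s ^ 2 = w.re ^ 2 + w.im ^ 2 := by
      rw [hs, ← Complex.normSq_eq_norm_sq, Complex.normSq_apply]; ring
    have hre : (Q * (starRingEnd ℂ) P).re = 1 + 2 * s ^ 2 + 3 * d ^ 2 * (s ^ 2) ^ 2
        - w.re * (3 + 5 * d * s ^ 2) + 4 * d * (2 * w.re ^ 2 - s ^ 2) := by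
      rw [hss, hP, hQ]
      simp [pow_two]
      ring
    rw [hre]
    have : 0 ≤ (s - w.re) * (3 + 5 * d * s ^ 2 - 8 * d * (s + w.re)) := by
      apply mul_nonneg (by linarith)
      have : d * w.re ≤ d * s := by gcongr
      have : 0 ≤ d * s ^ 2 := by positivity
      linarith
    nlinarith
  have err : (GG c w * (starRingEnd ℂ) (FF c w)).re ≥ (Q * (starRingEnd ℂ) P).re
      - (‖Q‖ * ‖E1‖ + ‖E2‖ * ‖P‖ + ‖E2‖ * ‖E1‖) := by
    have h1 : GG c w * (starRingEnd ℂ) (FF c w) = Q * (starRingEnd ℂ) P +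
      (Q * (starRingEnd ℂ) E1 + E2 * (starRingEnd ℂ) P + E2 * (starRingEnd ℂ) E1) := by
      rw [hF, hG]; simp only [map_add]; ring
    rw [h1, Complex.add_re]
    have h2 := Complex.abs_re_le_norm
      (Q * (starRingEnd ℂ) E1 + E2 * (starRingEnd ℂ) P + E2 * (starRingEnd ℂ) E1)
    have h3 : ‖Q * (starRingEnd ℂ) E1 + E2 * (starRingEnd ℂ) P + E2 * (starRingEnd ℂ) E1‖ ≤
        ‖Q‖ * ‖E1‖ + ‖E2‖ * ‖P‖ + ‖E2‖ * ‖E1‖ := by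
      refine norm_add₃_le.trans ?_
      simp
    have h4 := (abs_le.1 (h2.trans h3)).1
    linarith
  have hK1 : d ^ 2 * s ^ 3 ≤ 0.3 ^ 2 * 0.5 ^ 3 := by
    gcongr <;> linarith
  have b1 : ‖Q‖ * ‖E1‖ ≤ 2.225 * (d ^ 2 * s ^ 3 * (20 / 17)) := by gcongr
  have b2 : ‖E2‖ * ‖P‖ ≤ d ^ 2 * s ^ 3 * (492 / 100) * 1.575 := by gcongr
  have b3 : ‖E2‖ * ‖E1‖ ≤ d ^ 2 * s ^ 3 * (492 / 100) * (0.3 ^ 2 * 0.5 ^ 3 * (20 / 17)) := by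
    refine mul_le_mul e2 (e1.trans ?_) (norm_nonneg _) (by positivity)
    gcongr
  rcases hs0.eq_or_lt with h0 | h0
  · have main1 : (1 : ℝ) ≤ (Q * (starRingEnd ℂ) P).re := le_trans (by rw [← h0]; norm_num) main
    rw [← h0] at b1 b2 b3
    norm_num at b1 b2 b3
    linarith
  · have : 0 < d * s ^ 2 * (4 - 5 * s + 3 * d * s ^ 2 - 10.5 * (d * s)) := by
      apply mul_pos (by positivity)
      nlinarith
    have : 0 ≤ (1 - s) * (1 - 2 * s) := mul_nonneg (by linarith) (by linarith)
    norm_num at b1 b2 b3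
    nlinarith

theorem CoefHyp.upper {c : ℕ → ℝ} {d : ℝ} (H : CoefHyp c d) : (GG c ((1 / (2 - 3 * d) : ℝ) : ℂ)).re < 0 ∧
    0 < (FF c ((1 / (2 - 3 * d) : ℝ) : ℂ)).re := by
  have hd := H.dpos
  have hd' := H.dle
  have h3 := H.pos 3
  set R : ℝ := 1 / (2 - 3 * d) with hR
  have hRe : R * (2 - 3 * d) = 1 := by rw [hR]; field_simp; rw [div_self]; linarith
  have hR0 : 0 < R := by rw [hR]; apply div_pos <;> linarith
  have hR1 : R ≤ 10 / 11 := by rw [hR, div_le_iff₀ (by linarith)]; linarith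
  have hn : ‖(R : ℂ)‖ = R := by rw [Complex.norm_real, Real.norm_of_nonneg hR0.le]
  have t1 := H.tailF R (by rw [hn]; linarith)
  have t2 := H.tailG4 R (by rw [hn]; linarith)
  rw [hn] at t1 t2
  have hx : d * R ≤ 3 / 11 := by nlinarith
  have hx0 : 0 ≤ d * R := by positivity
  have hi : (1 - d * R)⁻¹ ≤ 11 / 8 := by
    rw [inv_le_comm₀ (by linarith) (by norm_num)]; norm_num; linarith
  have hi0 : 0 ≤ (1 - d * R)⁻¹ := by rw [inv_nonneg]; linarith
  have hi2 : (1 - d * R)⁻¹ ^ 2 ≤ (11 / 8) ^ 2 := by gcongr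
  constructor
  · have a := (Complex.re_le_norm _).trans t2
    have e : (GG c (R : ℂ) - (1 - 2 * R + 3 * d * R ^ 2 - 4 * c 3 * R ^ 3)).re
      = (GG c (R : ℂ)).re - (1 - 2 * R + 3 * d * R ^ 2 - 4 * c 3 * R ^ 3) := by
      rw [Complex.sub_re]; norm_cast
    rw [e] at a
    have h5 : d * R * (d * R / (1 - d * R) ^ 2 + 5 / (1 - d * R)) ≤ 3 := by
      rw [div_eq_mul_inv, div_eq_mul_inv, ← inv_pow]
      calc d * R * (d * R * (1 - d * R)⁻¹ ^ 2 + 5 * (1 - d * R)⁻¹) ≤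
        3 / 11 * (3 / 11 * (11 / 8) ^ 2 + 5 * (11 / 8)) := by gcongr
        _ ≤ 3 := by norm_num
    have h6 : c 3 * R ^ 3 * (d * R) * (d * R / (1 - d * R) ^ 2 + 5 / (1 - d * R))
       ≤ c 3 * R ^ 3 * 3 := by
      rw [mul_assoc]; gcongr
    have h7 : 0 < c 3 * R ^ 3 := by positivity
    have h8 : 1 - 2 * R + 3 * d * R ^ 2 = R ^ 2 * (3 * d * (3 * d - 1)) := by
      have : 1 - 2 * R + 3 * d * R ^ 2 = (R * (2 - 3 * d)) ^ 2 - 2 * R * (R * (2 - 3 * d))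
        + 3 * d * R ^ 2 := by rw [hRe]; ring
      rw [this]; ring
    have h9 : R ^ 2 * (3 * d * (3 * d - 1)) ≤ 0 := by
      apply mul_nonpos_of_nonneg_of_nonpos (by positivity)
      apply mul_nonpos_of_nonneg_of_nonpos (by positivity); linarith
    linarith
  · have a := (neg_le_abs _).trans ((Complex.abs_re_le_norm _).trans t1)
    have e : (FF c (R : ℂ) - (1 - R + d * R ^ 2)).re
      = (FF c (R : ℂ)).re - (1 - R + d * R ^ 2) := by
      rw [Complex.sub_re]; norm_cast
    rw [e] at a
    have h6 : d ^ 2 * R ^ 3 * (1 - d * R)⁻¹ ≤ d * R ^ 2 := by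
      calc d ^ 2 * R ^ 3 * (1 - d * R)⁻¹ = d * R ^ 2 * (d * R * (1 - d * R)⁻¹) := by ring
        _ ≤ d * R ^ 2 * (3 / 11 * (11 / 8)) := by gcongr
        _ ≤ d * R ^ 2 := by nlinarith [show 0 < d * R ^ 2 by positivity]
    linarith

theorem CoefHyp.upper' {c : ℕ → ℝ} {d : ℝ} (H : CoefHyp c d) : ∃ x : ℝ, 0 < x ∧ x < 1 / (2 - 3 * d) ∧
    (GG c (x : ℂ) / FF c (x : ℂ)).re < 0 := by
  have hd := H.dpos
  have hd' := H.dle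
  obtain ⟨u1, u2⟩ := H.upper
  set R : ℝ := 1 / (2 - 3 * d) with hR
  have hR0 : 0 < R := by rw [hR]; apply div_pos <;> linarith
  have hR1 : R ≤ 10 / 11 := by rw [hR, div_le_iff₀ (by linarith)]; linarith
  have hn : ‖(R : ℂ)‖ = R := by rw [Complex.norm_real, Real.norm_of_nonneg hR0.le]
  have hb : Metric.ball (0 : ℂ) 2 ∈ nhds (R : ℂ) :=
    Metric.isOpen_ball.mem_nhds (by rw [mem_ball_zero_iff, hn]; linarith)
  have cF : ContinuousAt (fun x : ℝ => (FF c (x : ℂ)).re) R :=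
    Complex.continuous_re.continuousAt.comp
      ((H.contF.continuousAt hb).comp Complex.continuous_ofReal.continuousAt)
  have cG : ContinuousAt (fun x : ℝ => (GG c (x : ℂ)).re) R :=
    Complex.continuous_re.continuousAt.comp
      ((H.contG.continuousAt hb).comp Complex.continuous_ofReal.continuousAt)
  have ev := ((cG.eventually_lt_const u1).and (cF.eventually_const_lt u2)).and (lt_mem_nhds hR0)
  obtain ⟨x, hx, hxR⟩ := ((ev.filter_mono nhdsWithin_le_nhds).and
    (self_mem_nhdsWithin (s := Set.Iio R))).exists
  refine ⟨x, hx.2, hxR, ?_⟩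
  have him : FF c (x : ℂ) = ((∑' n : ℕ, ((-1) ^ n * c n) * x ^ n : ℝ) : ℂ) := by
    rw [FF, Complex.ofReal_tsum]; push_cast; rfl
  have hF := hx.1.2
  rw [him] at hF ⊢
  rw [Complex.div_ofReal_re]
  exact div_neg_of_neg_of_pos hx.1.1 hF

theorem CoefHyp.lower' {c : ℕ → ℝ} {d : ℝ} (H : CoefHyp c d) : ∃ r : ℝ, 1 / 2 < r ∧ ∀ w : ℂ, ‖w‖ < r →
    w ∈ Metric.ball (0 : ℂ) 2 ∧ 0 < (GG c w / FF c w).re := by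
  have ho : IsOpen (Metric.ball (0 : ℂ) 2 ∩
      (fun w => (GG c w * (starRingEnd ℂ) (FF c w)).re) ⁻¹' Set.Ioi 0) := by
    apply ContinuousOn.isOpen_inter_preimage _ Metric.isOpen_ball isOpen_Ioi
    exact Complex.continuous_re.comp_continuousOn
      (H.contG.mul (Complex.continuous_conj.comp_continuousOn H.contF))
  obtain ⟨e, he, hs⟩ := (isCompact_closedBall (0 : ℂ) (1 / 2)).exists_thickening_subset_open ho (by
    intro w hw
    rw [mem_closedBall_zero_iff] at hw
    refine ⟨by rw [mem_ball_zero_iff]; linarith, H.lowerMain w hw⟩)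
  rw [thickening_closedBall he (by norm_num)] at hs
  refine ⟨e + 1 / 2, by linarith, fun w hw => ?_⟩
  obtain ⟨h1, h2⟩ := hs (mem_ball_zero_iff.2 hw)
  refine ⟨h1, ?_⟩
  have h2 : 0 < (GG c w * (starRingEnd ℂ) (FF c w)).re := h2
  have hF : FF c w ≠ 0 := by
    intro h; rw [h] at h2; simp at h2
  rw [div_eq_mul_inv, Complex.inv_def, ← mul_assoc, Complex.re_mul_ofReal]
  exact mul_pos h2 (inv_pos.2 (Complex.normSq_pos.2 hF))


theorem poch_summable {q : ℝ} (hq0 : 0 < q) (hq1 : q < 1) (a : ℝ) : Summable (fun k : ℕ => -(a * q ^ k)) :=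
  ((summable_geometric_of_lt_one hq0.le hq1).mul_left a).neg

theorem poch_term_pos {q : ℝ} (hq0 : 0 < q) (hq1 : q < 1) {a : ℝ} (ha : a < 1) (ha0 : 0 < a) (k : ℕ) : 0 < 1 + -(a * q ^ k) := by
  have : q ^ k ≤ 1 := pow_le_one₀ hq0.le hq1.le
  have : a * q ^ k ≤ a * 1 := by gcongr
  linarith

theorem poch_pos {q : ℝ} (hq0 : 0 < q) (hq1 : q < 1) {a : ℝ} (ha0 : 0 < a) (ha : a < 1) : 0 < qPochInf a q := by
  have h := Real.rexp_tsum_eq_tprod (poch_term_pos hq0 hq1 ha ha0)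
    (Real.summable_log_one_add_of_summable (poch_summable hq0 hq1 a))
  unfold qPochInf
  simp only [sub_eq_add_neg]
  rw [← h]
  exact Real.exp_pos _

theorem poch_rec {q : ℝ} (hq0 : 0 < q) (hq1 : q < 1) {a : ℝ} : qPochInf a q = (1 - a) * qPochInf (a * q) q := by
  unfold qPochInf
  rw [tprod_eq_zero_mul']
  · simp only [pow_zero, mul_one]
    congr 2; funext n; ring
  · have := Real.multipliable_one_add_of_summable (poch_summable hq0 hq1 (a * q))
    refine this.congr ?_
    intro n; ring

theorem qG_pos {q : ℝ} (hq0 : 0 < q) (hq1 : q < 1) {x : ℝ} (hx : 0 < x) : 0 < qGamma q x := by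
  have h1 : q ^ x < 1 := Real.rpow_lt_one hq0.le hq1 hx
  have h2 : 0 < q ^ x := Real.rpow_pos_of_pos hq0 x
  have h3 := poch_pos hq0 hq1 h2 h1
  have h4 := poch_pos hq0 hq1 hq0 hq1
  have h5 : 0 < (1 - q) ^ (1 - x) := Real.rpow_pos_of_pos (by linarith) _
  unfold qGamma
  positivity

theorem qG_rec {q : ℝ} (hq0 : 0 < q) (hq1 : q < 1) {x : ℝ} (hx : 0 < x) : qGamma q (x + 1) * (1 - q) = (1 - q ^ x) * qGamma q x := by
  have h1 : q ^ x < 1 := Real.rpow_lt_one hq0.le hq1 hx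
  have h2 : 0 < q ^ x := Real.rpow_pos_of_pos hq0 x
  have h1' : q ^ (x + 1) < 1 := Real.rpow_lt_one hq0.le hq1 (by linarith)
  have h2' : 0 < q ^ (x + 1) := Real.rpow_pos_of_pos hq0 _
  have h3 := poch_pos hq0 hq1 h2' h1'
  have hr := poch_rec hq0 hq1 (a := q ^ x)
  have e : q ^ x * q = q ^ (x + 1) := by rw [Real.rpow_add hq0, Real.rpow_one]
  have e2 : (1 - q) ^ (1 - x) = (1 - q) ^ (1 - (x + 1)) * (1 - q) := by
    rw [show 1 - x = (1 - (x + 1)) + 1 by ring, Real.rpow_add (by linarith), Real.rpow_one]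
  unfold qGamma
  rw [hr, e, e2]
  have : 1 - q ^ x ≠ 0 := by linarith
  field_simp

/-- two-step recursion factor -/
theorem qG_rec2 {q : ℝ} (hq0 : 0 < q) (hq1 : q < 1) {x : ℝ} (hx : 0 < x) :
    qGamma q (x + 2) * (1 - q) ^ 2 = (1 - q ^ x) * (1 - q ^ (x + 1)) * qGamma q x := by
  have h1 := qG_rec hq0 hq1 hx
  have h2 := qG_rec hq0 hq1 (x := x + 1) (by linarith)
  rw [show x + 1 + 1 = x + 2 by ring] at h2
  calc qGamma q (x + 2) * (1 - q) ^ 2 = qGamma q (x + 2) * (1 - q) * (1 - q) := by ring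
    _ = (1 - q ^ (x + 1)) * (qGamma q (x + 1) * (1 - q)) := by rw [h2]; ring
    _ = _ := by rw [h1]; ring

theorem phi_pos {q : ℝ} (hq0 : 0 < q) (hq1 : q < 1) {x : ℝ} (hx : 0 < x) : 0 < (1 - q ^ x) * (1 - q ^ (x + 1)) :=
  mul_pos (by linarith [Real.rpow_lt_one hq0.le hq1 hx])
    (by linarith [Real.rpow_lt_one hq0.le hq1 (show 0 < x + 1 by linarith)])

theorem phi_mono {q : ℝ} (hq0 : 0 < q) (hq1 : q < 1) {x y : ℝ} (hx : 0 < x) (hxy : x ≤ y) :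
    (1 - q ^ x) * (1 - q ^ (x + 1)) ≤ (1 - q ^ y) * (1 - q ^ (y + 1)) := by
  have h1 : q ^ y ≤ q ^ x := Real.rpow_le_rpow_of_exponent_ge hq0 hq1.le hxy
  have h2 : q ^ (y + 1) ≤ q ^ (x + 1) :=
    Real.rpow_le_rpow_of_exponent_ge hq0 hq1.le (by linarith)
  have h3 : q ^ (x + 1) < 1 := Real.rpow_lt_one hq0.le hq1 (by linarith)
  have h4 : q ^ x < 1 := Real.rpow_lt_one hq0.le hq1 (by linarith)
  apply mul_le_mul <;> linarith

theorem d_bound {q : ℝ} (hq0 : 0 < q) (hq1 : q < 1) {γ : ℝ} (hγ0 : 0 ≤ γ) (hR : condR q γ) :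
    q ^ 2 * ((1 - q ^ (γ + 1)) * (1 - q ^ (γ + 2))) ≤
      3 / 10 * ((1 - q ^ (γ + 3)) * (1 - q ^ (γ + 4))) := by
  rcases hR with (h | h) | ⟨-, -, h⟩
  · subst h
    have e1 : q ^ ((0 : ℝ) + 1) = q := by norm_num
    have e2 : q ^ ((0 : ℝ) + 2) = q ^ 2 := by rw [zero_add]; exact_mod_cast Real.rpow_natCast q 2
    have e3 : q ^ ((0 : ℝ) + 3) = q ^ 3 := by rw [zero_add]; exact_mod_cast Real.rpow_natCast q 3
    have e4 : q ^ ((0 : ℝ) + 4) = q ^ 4 := by rw [zero_add]; exact_mod_cast Real.rpow_natCast q 4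
    rw [e1, e2, e3, e4]
    have : 3 / 10 * ((1 - q ^ 3) * (1 - q ^ 4)) - q ^ 2 * ((1 - q) * (1 - q ^ 2)) =
      (1 - q) * (1 - q ^ 2) * (3 / 10 * ((1 + q + q ^ 2) * (1 + q ^ 2)) - q ^ 2) := by ring
    have h2 : 0 ≤ 3 / 10 * ((1 + q + q ^ 2) * (1 + q ^ 2)) - q ^ 2 := by
      nlinarith [sq_nonneg (q - 1), sq_nonneg (q ^ 2 - 1), pow_pos hq0 3, pow_pos hq0 4,
        mul_nonneg hq0.le (sq_nonneg (q - 1)), mul_nonneg (sq_nonneg q) (sq_nonneg (q - 1)), sq_nonneg (q ^ 2 - q)]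
    have h3 : 0 ≤ (1 - q) * (1 - q ^ 2) := mul_nonneg (by linarith) (by nlinarith)
    nlinarith [mul_nonneg h3 h2]
  · subst h
    have e1 : q ^ ((1 : ℝ) + 1) = q ^ 2 := by
      rw [show (1 : ℝ) + 1 = (2 : ℕ) by norm_num, Real.rpow_natCast]
    have e2 : q ^ ((1 : ℝ) + 2) = q ^ 3 := by
      rw [show (1 : ℝ) + 2 = (3 : ℕ) by norm_num, Real.rpow_natCast]
    have e3 : q ^ ((1 : ℝ) + 3) = q ^ 4 := by
      rw [show (1 : ℝ) + 3 = (4 : ℕ) by norm_num, Real.rpow_natCast]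
    have e4 : q ^ ((1 : ℝ) + 4) = q ^ 5 := by
      rw [show (1 : ℝ) + 4 = (5 : ℕ) by norm_num, Real.rpow_natCast]
    rw [e1, e2, e3, e4]
    have : 3 / 10 * ((1 - q ^ 4) * (1 - q ^ 5)) - q ^ 2 * ((1 - q ^ 2) * (1 - q ^ 3)) =
      (1 - q) * (1 - q ^ 2) * (3 / 10 * ((1 + q + q ^ 2 + q ^ 3 + q ^ 4) * (1 + q ^ 2))
        - q ^ 2 * (1 + q + q ^ 2)) := by ring
    have h2 : 0 ≤ 3 / 10 * ((1 + q + q ^ 2 + q ^ 3 + q ^ 4) * (1 + q ^ 2))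
        - q ^ 2 * (1 + q + q ^ 2) := by
      have e : 3 / 10 * ((1 + q + q ^ 2 + q ^ 3 + q ^ 4) * (1 + q ^ 2))
        - q ^ 2 * (1 + q + q ^ 2) = (1 - q) ^ 2 *
          (3 / 10 * (1 + q ^ 4) + 9 / 10 * (q + q ^ 3) + 11 / 10 * q ^ 2) := by ring
      rw [e]; positivity
    have h3 : 0 ≤ (1 - q) * (1 - q ^ 2) := mul_nonneg (by linarith) (by nlinarith)
    nlinarith [mul_nonneg h3 h2]
  · have p1 : 0 < q ^ (γ + 1) := Real.rpow_pos_of_pos hq0 _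
    have p2 : 0 < q ^ (γ + 2) := Real.rpow_pos_of_pos hq0 _
    have l1 : q ^ (γ + 1) < 1 := Real.rpow_lt_one hq0.le hq1 (by linarith)
    have l2 : q ^ (γ + 2) < 1 := Real.rpow_lt_one hq0.le hq1 (by linarith)
    have hh : (1 - q ^ (γ + 1)) * (1 - q ^ (γ + 2)) ≤ 1 :=
      mul_le_one₀ (by linarith) (by linarith) (by linarith)
    have hq : q < 1 / 2 := by
      rw [mul_assoc, mul_assoc, lt_inv_mul_iff₀ hq0, mul_one] at h
      nlinarith
    have m := phi_mono hq0 hq1 (x := γ + 1) (y := γ + 3) (by linarith) (by linarith)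
    have pp := phi_pos hq0 hq1 (x := γ + 1) (by linarith)
    rw [show γ + 1 + 1 = γ + 2 by ring] at m pp
    rw [show γ + 3 + 1 = γ + 4 by ring] at m
    have : q ^ 2 ≤ 3 / 10 := by nlinarith
    calc _ ≤ 3 / 10 * ((1 - q ^ (γ + 1)) * (1 - q ^ (γ + 2))) := by gcongr
      _ ≤ _ := by gcongr


/-- normalized coefficients -/
noncomputable def coef (q γ : ℝ) (n : ℕ) : ℝ :=
  q ^ (n * (n - 1)) * qGamma q (γ + 1) / qGamma q (2 * n + γ + 1) *
    (qGamma q (γ + 3) / qGamma q (γ + 1)) ^ n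

theorem coef_succ {q γ : ℝ} (hq0 : 0 < q) (hq1 : q < 1) (hγ0 : 0 ≤ γ) (n : ℕ) :
    coef q γ (n + 1) * ((1 - q ^ (2 * n + γ + 1)) * (1 - q ^ (2 * n + γ + 2))) =
    coef q γ n * (q ^ (2 * n) * ((1 - q ^ (γ + 1)) * (1 - q ^ (γ + 2)))) := by
  have hx : 0 < 2 * (n : ℝ) + γ + 1 := by positivity
  have r1 := qG_rec2 hq0 hq1 (x := γ + 1) (by linarith)
  have r2 := qG_rec2 hq0 hq1 hx
  have g1 := qG_pos hq0 hq1 (x := γ + 1) (by linarith)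
  have g3 := qG_pos hq0 hq1 (x := γ + 3) (by linarith)
  have gn := qG_pos hq0 hq1 hx
  have gn' := qG_pos hq0 hq1 (x := 2 * (n : ℝ) + γ + 1 + 2) (by linarith)
  have hQ : (1 - q) ^ 2 ≠ 0 := by have : 1 - q ≠ 0 := by linarith
                                  positivity
  rw [show γ + 1 + 1 = γ + 2 by ring, show γ + 1 + 2 = γ + 3 by ring] at r1
  rw [show 2 * (n : ℝ) + γ + 1 + 1 = 2 * n + γ + 2 by ring] at r2
  have e1 : (1 - q ^ (γ + 1)) * (1 - q ^ (γ + 2)) =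
      qGamma q (γ + 3) * (1 - q) ^ 2 / qGamma q (γ + 1) := by
    rw [eq_div_iff g1.ne']; exact r1.symm
  have e2 : (1 - q ^ (2 * (n : ℝ) + γ + 1)) * (1 - q ^ (2 * (n : ℝ) + γ + 2)) =
      qGamma q (2 * n + γ + 1 + 2) * (1 - q) ^ 2 / qGamma q (2 * n + γ + 1) := by
    rw [eq_div_iff gn.ne']; exact r2.symm
  have e3 : (n + 1) * (n + 1 - 1) = n * (n - 1) + 2 * n := by
    rcases n with _ | n
    · rfl
    · simp; ring
  rw [e1, e2, coef, coef, e3, pow_add,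
    show 2 * ((n + 1 : ℕ) : ℝ) + γ + 1 = 2 * n + γ + 1 + 2 by push_cast; ring]
  rw [pow_succ (qGamma q (γ + 3) / qGamma q (γ + 1))]
  generalize (qGamma q (γ + 3) / qGamma q (γ + 1)) ^ n = T
  field_simp

theorem coef_hyp {q γ : ℝ} (hq0 : 0 < q) (hq1 : q < 1) (hγ0 : 0 ≤ γ) (hR : condR q γ) :
    CoefHyp (coef q γ) (coef q γ 2) := by
  have g1 := qG_pos hq0 hq1 (x := γ + 1) (by linarith)
  have g3 := qG_pos hq0 hq1 (x := γ + 3) (by linarith)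
  have pos : ∀ n, 0 < coef q γ n := by
    intro n
    have gn := qG_pos hq0 hq1 (x := 2 * (n : ℝ) + γ + 1) (by positivity)
    unfold coef; positivity
  have c1 : coef q γ 1 = 1 := by
    unfold coef
    rw [show 2 * ((1 : ℕ) : ℝ) + γ + 1 = γ + 3 by push_cast; ring]
    simp; field_simp
  have h2 := coef_succ hq0 hq1 hγ0 1
  rw [c1, show 2 * ((1 : ℕ) : ℝ) + γ + 1 = γ + 3 by push_cast; ring,
    show 2 * ((1 : ℕ) : ℝ) + γ + 2 = γ + 4 by push_cast; ring] at h2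
  norm_num at h2
  have p3 := phi_pos hq0 hq1 (x := γ + 3) (by linarith)
  have p1 := phi_pos hq0 hq1 (x := γ + 1) (by linarith)
  rw [show γ + 3 + 1 = γ + 4 by ring] at p3
  rw [show γ + 1 + 1 = γ + 2 by ring] at p1
  refine ⟨?_, c1, rfl, pos 2, ?_, pos, ?_⟩
  · unfold coef; simp [g1.ne']
  · have := d_bound hq0 hq1 hγ0 hR
    rw [← h2] at this
    exact le_of_mul_le_mul_right this p3
  · intro n
    have h := coef_succ hq0 hq1 hγ0 (n + 1)
    have m := phi_mono hq0 hq1 (x := γ + 3) (y := 2 * ((n + 1 : ℕ) : ℝ) + γ + 1) (by linarith)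
      (by push_cast; have : (0 : ℝ) ≤ n := by positivity
          linarith)
    rw [show γ + 3 + 1 = γ + 4 by ring,
      show 2 * ((n + 1 : ℕ) : ℝ) + γ + 1 + 1 = 2 * ((n + 1 : ℕ) : ℝ) + γ + 2 by ring] at m
    have hqq : q ^ (2 * (n + 1)) ≤ q ^ 2 := pow_le_pow_of_le_one hq0.le hq1.le (by omega)
    have pn := (pos (n + 1)).le
    have pn2 := (pos (n + 2)).le
    have p2 := (pos 2).le
    refine le_of_mul_le_mul_right ?_ p3
    calc coef q γ (n + 2) * ((1 - q ^ (γ + 3)) * (1 - q ^ (γ + 4)))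
        ≤ coef q γ (n + 2) * ((1 - q ^ (2 * ((n + 1 : ℕ) : ℝ) + γ + 1)) *
            (1 - q ^ (2 * ((n + 1 : ℕ) : ℝ) + γ + 2))) := by gcongr
      _ = coef q γ (n + 1) * (q ^ (2 * (n + 1)) * ((1 - q ^ (γ + 1)) * (1 - q ^ (γ + 2)))) := h
      _ ≤ coef q γ (n + 1) * (q ^ 2 * ((1 - q ^ (γ + 1)) * (1 - q ^ (γ + 2)))) := by gcongr
      _ = _ := by rw [← h2]; ring

theorem hML_eq {q σ γ : ℝ} (hq0 : 0 < q) (hq1 : q < 1) (hγ0 : 0 ≤ γ) (z : ℂ) :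
    hML γ σ q z = z * FF (coef q γ)
      ((σ ^ 2 * qGamma q (γ + 1) / qGamma q (γ + 3) : ℝ) * z) := by
  have g1 := qG_pos hq0 hq1 (x := γ + 1) (by linarith)
  have g3 := qG_pos hq0 hq1 (x := γ + 3) (by linarith)
  unfold hML FF
  rw [mul_assoc, ← tsum_mul_left]
  congr 2
  funext n
  rw [mul_pow, ← mul_assoc, ← mul_assoc, ← Complex.ofReal_pow, ← Complex.ofReal_mul,
    ← Complex.ofReal_mul]
  congr 2
  unfold coef
  rw [div_pow, div_pow, mul_pow, ← pow_mul]
  field_simp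

theorem stmt11 (q σ γ : ℝ) (hq0 : 0 < q) (hq1 : q < 1) (hσ : 0 < σ)
    (hγ0 : 0 ≤ γ) (hγ2 : γ < 2) (hR : condR q γ) :
    qGamma q (γ + 3) / (2 * σ ^ 2 * qGamma q (γ + 1)) <
      radiusStarlike 0 (hML γ σ q) ∧
    radiusStarlike 0 (hML γ σ q) <
      qGamma q (γ + 3) * qGamma q (γ + 5) /
        (σ ^ 2 * (2 * qGamma q (γ + 1) * qGamma q (γ + 5) -
          3 * q ^ 2 * qGamma q (γ + 3) ^ 2)) := by
  have H := coef_hyp hq0 hq1 hγ0 hR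
  have g1 := qG_pos hq0 hq1 (x := γ + 1) (by linarith)
  have g3 := qG_pos hq0 hq1 (x := γ + 3) (by linarith)
  have g5 := qG_pos hq0 hq1 (x := γ + 5) (by linarith)
  have hd := H.dpos
  have hd' := H.dle
  set A : ℝ := σ ^ 2 * qGamma q (γ + 1) / qGamma q (γ + 3) with hA
  have hA0 : 0 < A := by positivity
  have hd2 : coef q γ 2 = q ^ 2 * qGamma q (γ + 3) ^ 2 /
      (qGamma q (γ + 1) * qGamma q (γ + 5)) := by
    unfold coef
    rw [show 2 * ((2 : ℕ) : ℝ) + γ + 1 = γ + 5 by push_cast; ring]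
    norm_num
    field_simp
  have key : ∀ z : ℂ, z ≠ 0 → (A : ℂ) * z ∈ Metric.ball (0 : ℂ) 2 →
      z * deriv (hML γ σ q) z / hML γ σ q z =
        GG (coef q γ) (A * z) / FF (coef q γ) (A * z) := by
    intro z hz hb
    have hAc : (A : ℂ) ≠ 0 := by exact_mod_cast hA0.ne'
    have h1 := H.deriv _ hb
    have h2 : HasDerivAt (fun z : ℂ => (A : ℂ) * z) (A : ℂ) z := by
      simpa using (hasDerivAt_id z).const_mul (A : ℂ)
    have h3 := (h1.comp z h2).div_const (A : ℂ)
    have e : hML γ σ q = fun z => ((fun z => z * FF (coef q γ) z) ∘ fun z => (A : ℂ) * z) z / A := by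
      funext z
      rw [hML_eq hq0 hq1 hγ0, ← hA]
      simp only [Function.comp]
      field_simp
    have h4 : deriv (hML γ σ q) z = GG (coef q γ) (A * z) := by
      rw [e, h3.deriv]; field_simp
    rw [h4, hML_eq hq0 hq1 hγ0, mul_div_mul_left _ _ hz]
  obtain ⟨x, hx0, hxR, hx⟩ := H.upper'
  obtain ⟨r, hr, hrr⟩ := H.lower'
  have hR1 : 1 / (2 - 3 * coef q γ 2) ≤ 10 / 11 := by
    rw [div_le_iff₀ (by linarith)]; linarith
  have ub : ∀ s ∈ {r : ℝ | 0 < r ∧ ∀ z : ℂ, 0 < ‖z‖ → ‖z‖ < r →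
      0 < (z * deriv (hML γ σ q) z / hML γ σ q z).re}, s ≤ x / A := by
    rintro s ⟨hs0, hs⟩
    by_contra! hlt
    have hxA : 0 < x / A := by positivity
    have hn : ‖((x / A : ℝ) : ℂ)‖ = x / A := by rw [Complex.norm_real, Real.norm_of_nonneg hxA.le]
    have h := hs ((x / A : ℝ) : ℂ) (by rw [hn]; exact hxA) (by rw [hn]; exact hlt)
    have e : (A : ℂ) * ((x / A : ℝ) : ℂ) = (x : ℂ) := by
      rw [← Complex.ofReal_mul, mul_div_cancel₀ _ hA0.ne']
    rw [key _ (by exact_mod_cast hxA.ne') (by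
      rw [e, mem_ball_zero_iff, Complex.norm_real, Real.norm_of_nonneg hx0.le]; linarith), e] at h
    linarith
  constructor
  · have hmem : r / A ∈ {r : ℝ | 0 < r ∧ ∀ z : ℂ, 0 < ‖z‖ → ‖z‖ < r →
        0 < (z * deriv (hML γ σ q) z / hML γ σ q z).re} := by
      refine ⟨by apply div_pos _ hA0; linarith, fun z hz0 hz => ?_⟩
      have hn : ‖(A : ℂ) * z‖ < r := by
        rw [norm_mul, Complex.norm_real, Real.norm_of_nonneg hA0.le]
        rw [lt_div_iff₀ hA0] at hz; linarith
      obtain ⟨h1, h2⟩ := hrr _ hn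
      rw [key z (norm_pos_iff.1 hz0) h1]
      exact h2
    have h1 : r / A ≤ radiusStarlike 0 (hML γ σ q) := le_csSup ⟨x / A, ub⟩ hmem
    refine lt_of_lt_of_le ?_ h1
    have e : qGamma q (γ + 3) / (2 * σ ^ 2 * qGamma q (γ + 1)) = 1 / 2 / A := by
      rw [hA]; field_simp
    rw [e]
    gcongr
  · have h1 : radiusStarlike 0 (hML γ σ q) ≤ x / A := Real.sSup_le ub (by positivity)
    refine lt_of_le_of_lt h1 ?_
    have e : qGamma q (γ + 3) * qGamma q (γ + 5) /
        (σ ^ 2 * (2 * qGamma q (γ + 1) * qGamma q (γ + 5) -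
          3 * q ^ 2 * qGamma q (γ + 3) ^ 2)) = 1 / (2 - 3 * coef q γ 2) / A := by
      have e0 : 2 * qGamma q (γ + 1) * qGamma q (γ + 5) - 3 * q ^ 2 * qGamma q (γ + 3) ^ 2
        = (2 - 3 * coef q γ 2) * (qGamma q (γ + 1) * qGamma q (γ + 5)) := by
        rw [hd2]; field_simp
      have : 2 - 3 * coef q γ 2 ≠ 0 := by linarith
      rw [e0, hA]; field_simp
    rw [e]
    gcongr
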